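/- arXiv:2206.08149 — 7 statements merged into one kernel-verified Lean document; each statement's English description precedes it below -/
import Mathlib

section
/- Let a, b ∈ ℝⁿ. If a majorizes b in the natural order, then the isotonic projection a⁺ majorizes b⁺ in the natural order. -/
open Finset

/-- The isotonic cone `{x : x₁ ≥ x₂ ≥ ⋯ ≥ xₙ}` in `ℝⁿ`. -/
def isoCone (n : ℕ) : Set (EuclideanSpace ℝ (Fin n)) :=
  {x | ∀ i j : Fin n, i ≤ j → x j ≤ x i}

/-- `p` is the metric (Euclidean) projection of `y` onto `S`. -/
def IsProjOn {n : ℕ} (S : Set (EuclideanSpace ℝ (Fin n)))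
    (y p : EuclideanSpace ℝ (Fin n)) : Prop :=
  p ∈ S ∧ ∀ r ∈ S, ‖y - p‖ ≤ ‖y - r‖

/-- `a` majorizes `b` in the natural order: every initial partial sum of `a`
is at least that of `b`, with equality for the total sums. -/
def MajNO {n : ℕ} (a b : Fin n → ℝ) : Prop :=
  (∀ k : Fin n, ∑ i ∈ Finset.Iic k, b i ≤ ∑ i ∈ Finset.Iic k, a i) ∧
  ∑ i, a i = ∑ i, b i

/-!
Among the vectors of the isotonic cone that majorize `y`, the projection of `y` is the least one for
the natural order. Granting this, if `a` majorizes `b`, then `a⁺` majorizes `a`, hence `b`, and so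
`a⁺` majorizes `b⁺` by minimality.

Shifting the projection `p` of `y` upwards on an initial segment does not leave the cone, so the
variational inequality shows that `p` majorizes `y`. Where `p` jumps, a small shift downwards is
also allowed, and the partial sums of `p` and `y` agree. Minimality follows: if `x` is isotonic and
majorizes `y`, the sums of `x - p` over `{i | p k < p i}` and over `{i | p k ≤ p i}` are
nonnegative, and `Iic k` arises from one of these two segments by adding nonnegative terms or by
removing nonpositive ones, according to whether `p k ≤ x k` or not.
-/

open scoped InnerProductSpace

section Majorization

variable {n : ℕ} {a b c : Fin n → ℝ}

theorem MajNO.trans (hab : MajNO a b) (hbc : MajNO b c) : MajNO a c :=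
  ⟨fun k => (hbc.1 k).trans (hab.1 k), hab.2.trans hbc.2⟩

theorem MajNO.sum_le_sum_of_isLowerSet (h : MajNO a b) {s : Finset (Fin n)}
    (hs : IsLowerSet (s : Set (Fin n))) : ∑ i ∈ s, b i ≤ ∑ i ∈ s, a i := by
  rcases s.eq_empty_or_nonempty with rfl | hne
  · simp
  · have s_eq_Iic : s = Iic (s.max' hne) := by
      ext i
      rw [mem_Iic]
      exact ⟨s.le_max' i, fun hi => hs hi (s.max'_mem hne)⟩
    rw [s_eq_Iic]
    exact h.1 _

end Majorization

section FinsetSeparation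

variable {ι R : Type*}

theorem exists_pos_forall_mem_forall_notMem_add_le [Finite ι] [AddCommGroup R]
    [LinearOrder R] [IsOrderedAddMonoid R] [Nontrivial R] [DenselyOrdered R] {p : ι → R}
    {s : Finset ι} (hs : ∀ i ∈ s, ∀ j ∉ s, p j < p i) :
    ∃ ε > 0, ∀ i ∈ s, ∀ j ∉ s, p j + ε ≤ p i := by
  obtain ⟨ε, hε, hgap⟩ := Pi.exists_forall_pos_add_lt
    (ι := {ij : ι × ι // ij.1 ∈ s ∧ ij.2 ∉ s}) (x := fun ij => p ij.1.2) (y := fun ij => p ij.1.1)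
    fun ij => hs _ ij.2.1 _ ij.2.2
  exact ⟨ε, hε, fun i hi j hj => (hgap ⟨(i, j), hi, hj⟩).le⟩

theorem isLowerSet_of_antitone_of_forall_notMem_lt [Preorder ι] [Preorder R] {p : ι → R}
    (hp : Antitone p) {s : Finset ι} (hs : ∀ i ∈ s, ∀ j ∉ s, p j < p i) :
    IsLowerSet (s : Set ι) := by
  intro i j hji hi
  by_contra hj
  exact (hs i hi j hj).not_ge (hp hji)

end FinsetSeparation

section Projection

variable {n : ℕ} {S : Set (EuclideanSpace ℝ (Fin n))} {y p r : EuclideanSpace ℝ (Fin n)}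

theorem mem_isoCone : p ∈ isoCone n ↔ Antitone p := Iff.rfl

theorem convex_isoCone : Convex ℝ (isoCone n) :=
  fun _ hx _ hz _ _ hs ht _ _ _ hij =>
    add_le_add (mul_le_mul_of_nonneg_left (hx _ _ hij) hs)
      (mul_le_mul_of_nonneg_left (hz _ _ hij) ht)

theorem IsProjOn.inner_sub_sub_nonpos (h : IsProjOn S y p) (hS : Convex ℝ S) (hr : r ∈ S) :
    ⟪y - p, r - p⟫_ℝ ≤ 0 := by
  have : Nonempty S := ⟨⟨p, h.1⟩⟩
  have norm_eq_iInf : ‖y - p‖ = ⨅ w : S, ‖y - w‖ :=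
    le_antisymm (le_ciInf fun w => h.2 w w.2)
      (ciInf_le (f := fun w : S => ‖y - w‖)
        ⟨0, Set.forall_mem_range.2 fun _ => norm_nonneg _⟩ ⟨p, h.1⟩)
  exact (norm_eq_iInf_iff_real_inner_le_zero hS h.1).1 norm_eq_iInf r hr

theorem IsProjOn.mul_sum_sub_nonpos (h : IsProjOn (isoCone n) y p) {s : Finset (Fin n)} {t : ℝ}
    (ht : Antitone fun i => p i + if i ∈ s then t else 0) :
    t * ∑ i ∈ s, (y i - p i) ≤ 0 := by
  have hmem : WithLp.toLp 2 (fun i => p i + if i ∈ s then t else 0) ∈ isoCone n :=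
    mem_isoCone.2 ht
  have hinner := h.inner_sub_sub_nonpos convex_isoCone hmem
  rw [mul_sum]
  simpa [PiLp.inner_apply] using hinner

theorem IsProjOn.sum_le_sum_of_isLowerSet (h : IsProjOn (isoCone n) y p) {s : Finset (Fin n)}
    (hs : IsLowerSet (s : Set (Fin n))) : ∑ i ∈ s, y i ≤ ∑ i ∈ s, p i := by
  have hshift : Antitone fun i => p i + if i ∈ s then (1 : ℝ) else 0 := by
    refine (mem_isoCone.1 h.1).add fun i j hij => ?_
    have hmem : j ∈ s → i ∈ s := hs hij
    split_ifs <;> simp_all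
  simpa using h.mul_sum_sub_nonpos hshift

theorem IsProjOn.sum_eq_sum_of_forall_notMem_lt (h : IsProjOn (isoCone n) y p)
    {s : Finset (Fin n)} (hs : ∀ i ∈ s, ∀ j ∉ s, p j < p i) :
    ∑ i ∈ s, p i = ∑ i ∈ s, y i := by
  have hp := mem_isoCone.1 h.1
  have hlower := isLowerSet_of_antitone_of_forall_notMem_lt hp hs
  obtain ⟨ε, hε, hgap⟩ := exists_pos_forall_mem_forall_notMem_add_le hs
  have hshift : Antitone fun i => p i + if i ∈ s then -ε else 0 := by
    intro i j hij
    have hpij := hp hij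
    have hmem : j ∈ s → i ∈ s := hlower hij
    dsimp only
    split_ifs with hj hi hi
    · linarith
    · exact absurd (hmem hj) hi
    · linarith [hgap i hi j hj]
    · linarith
  have hsum : 0 ≤ ∑ i ∈ s, (y i - p i) :=
    nonneg_of_mul_nonpos_right (h.mul_sum_sub_nonpos hshift) (neg_lt_zero.2 hε)
  rw [sum_sub_distrib, sub_nonneg] at hsum
  exact hsum.antisymm (h.sum_le_sum_of_isLowerSet hlower)

theorem IsProjOn.majNO (h : IsProjOn (isoCone n) y p) : MajNO p y :=
  ⟨fun k => h.sum_le_sum_of_isLowerSet (by simpa using isLowerSet_Iic k),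
    h.sum_eq_sum_of_forall_notMem_lt fun _ _ j hj => absurd (mem_univ j) hj⟩

theorem IsProjOn.sum_sub_nonneg_of_forall_notMem_lt (h : IsProjOn (isoCone n) y p)
    {x : Fin n → ℝ} (hxy : MajNO x y) {s : Finset (Fin n)}
    (hs : ∀ i ∈ s, ∀ j ∉ s, p j < p i) : 0 ≤ ∑ i ∈ s, (x i - p i) := by
  rw [sum_sub_distrib, sub_nonneg, h.sum_eq_sum_of_forall_notMem_lt hs]
  exact hxy.sum_le_sum_of_isLowerSet
    (isLowerSet_of_antitone_of_forall_notMem_lt (mem_isoCone.1 h.1) hs)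

theorem IsProjOn.majNO_of_antitone (h : IsProjOn (isoCone n) y p) {x : Fin n → ℝ}
    (hx : Antitone x) (hxy : MajNO x y) : MajNO x p := by
  have hp := mem_isoCone.1 h.1
  refine ⟨fun k => ?_, hxy.2.trans h.majNO.2.symm⟩
  rw [← sub_nonneg, ← sum_sub_distrib]
  rcases le_or_gt (p k) (x k) with hk | hk
  · let s : Finset (Fin n) := {i | p k < p i}
    have hsep : ∀ i ∈ s, ∀ j ∉ s, p j < p i := by
      simp only [s, mem_filter_univ, not_lt]
      exact fun i hi j hj => hj.trans_lt hi
    have hsub : s ⊆ Iic k := fun i hi =>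
      mem_Iic.2 (hp.reflect_lt ((mem_filter_univ i).1 hi)).le
    calc
      0 ≤ ∑ i ∈ s, (x i - p i) := h.sum_sub_nonneg_of_forall_notMem_lt hxy hsep
      _ ≤ ∑ i ∈ Iic k, (x i - p i) := by
        refine sum_le_sum_of_subset_of_nonneg hsub fun i hik his => sub_nonneg.2 ?_
        have hpi : p i ≤ p k := by simpa [s] using his
        exact hpi.trans (hk.trans (hx (mem_Iic.1 hik)))
  · let s : Finset (Fin n) := {i | p k ≤ p i}
    have hsep : ∀ i ∈ s, ∀ j ∉ s, p j < p i := by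
      simp only [s, mem_filter_univ, not_le]
      exact fun i hi j hj => hj.trans_le hi
    have hsub : Iic k ⊆ s := fun i hi => (mem_filter_univ i).2 (hp (mem_Iic.1 hi))
    calc
      0 ≤ ∑ i ∈ s, (x i - p i) := h.sum_sub_nonneg_of_forall_notMem_lt hxy hsep
      _ ≤ ∑ i ∈ Iic k, (x i - p i) := by
        refine sum_le_sum_of_subset_of_nonpos' hsub fun i his hik => sub_nonpos.2 ?_
        have hki : k ≤ i := (not_le.1 (mt mem_Iic.2 hik)).le
        exact (hx hki).trans (hk.le.trans ((mem_filter_univ i).1 his))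

end Projection

/-- Lemma 6.3 (`lm:maj`): isotonic projection preserves majorization in the natural order. -/
theorem isoProj_majNO {n : ℕ} (a b ap bp : EuclideanSpace ℝ (Fin n))
    (hap : IsProjOn (isoCone n) a ap) (hbp : IsProjOn (isoCone n) b bp)
    (h : MajNO a b) : MajNO ap bp :=
  hbp.majNO_of_antitone (mem_isoCone.1 hap.1) (hap.majNO.trans h)
end

section
/- Let a, b ∈ ℝⁿ with a majorizing b in the natural order. Then there exist a positive integer L and vectors w¹,…,w^L ∈ ℝⁿ with w¹ = a, w^L = b, such that w^l is an upward transport of w^{l+1} for every 1 ≤ l ≤ L−1. -/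
open Finset

/-- `a` is an upward transport of `b`: `a` is obtained from `b` by moving some mass
from entry `j` to an earlier entry `i < j`. -/
def UpwardTransport {n : ℕ} (a b : Fin n → ℝ) : Prop :=
  ∃ i j : Fin n, i < j ∧ (∀ k, k ≠ i → k ≠ j → a k = b k) ∧
    a i + a j = b i + b j ∧ b i ≤ a i

/-!
A vector of `ℝⁿ` is the sequence of increments of its partial sums. Replace the partial sums of
`a` by those of `b` one at a time, from left to right. The replacement at a single inner position
lowers one partial sum, which only affects the two increments adjacent to it: it moves mass from
the left entry to the right one. The first and last partial sums already agree.
-/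

section Increments

variable {G : Type*} {n : ℕ}

/-- The vector of consecutive differences of `F`, a left inverse to `Fin.partialSum`. It allows
vectors to be described by prescribing their partial sums. -/
def increments [Sub G] (F : Fin (n + 1) → G) (k : Fin n) : G :=
  F k.succ - F k.castSucc

theorem increments_partialSum [AddCommGroup G] (f : Fin n → G) :
    increments (Fin.partialSum f) = f := by
  ext k
  rw [increments, Fin.partialSum_succ, add_sub_cancel_left]

end Increments

section PartialSum

variable {M : Type*} [AddCommMonoid M] {n : ℕ}

theorem partialSum_succ_eq_sum_Iic (f : Fin n → M) (k : Fin n) :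
    Fin.partialSum f k.succ = ∑ i ∈ Iic k, f i := by
  rw [Fin.partialSum, List.sum_take_ofFn]
  refine Finset.sum_congr ?_ fun _ _ => rfl
  ext i
  simp only [mem_filter_univ, mem_Iic, Fin.val_succ, Nat.lt_succ_iff, Fin.le_def]

theorem partialSum_last (f : Fin n → M) : Fin.partialSum f (Fin.last n) = ∑ i, f i := by
  rw [Fin.partialSum, List.sum_take_ofFn, filter_true_of_mem fun i _ => i.isLt]

end PartialSum

section Splice

variable {α : Type*} {n l : ℕ} {F G : Fin n → α} {m : Fin n}

/-- The sequence that follows `G` strictly before position `l` and `F` from `l` on. As `l` grows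
it replaces the terms of `F` by those of `G` one at a time. -/
def splice (F G : Fin n → α) (l : ℕ) (m : Fin n) : α :=
  if m.val < l then G m else F m

theorem splice_of_lt (h : m.val < l) : splice F G l m = G m :=
  if_pos h

theorem splice_of_le (h : l ≤ m.val) : splice F G l m = F m :=
  if_neg h.not_gt

theorem splice_succ_of_ne (h : m.val ≠ l) : splice F G (l + 1) m = splice F G l m := by
  simp only [splice, show m.val < l + 1 ↔ m.val < l by lia]

theorem splice_one_eq_left {F G : Fin (n + 1) → α} (h : F 0 = G 0) : splice F G 1 = F := by
  ext m
  cases m using Fin.cases with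
  | zero => rw [splice_of_lt (by simp), h]
  | succ k => exact splice_of_le (by simp)

theorem splice_eq_right_of_le {F G : Fin (n + 1) → α} (h : F (Fin.last n) = G (Fin.last n))
    (hl : n ≤ l) : splice F G l = G := by
  ext m
  cases m using Fin.lastCases with
  | last => rw [splice, h, ite_self]
  | cast k => exact splice_of_lt (k.isLt.trans_le hl)

end Splice

section Transport

variable {n : ℕ}

theorem MajNO.partialSum_le {a b : Fin n → ℝ} (h : MajNO a b) (m : Fin (n + 1)) :
    Fin.partialSum b m ≤ Fin.partialSum a m := by
  cases m using Fin.cases with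
  | zero => simp only [Fin.partialSum_zero, le_refl]
  | succ k => simpa only [partialSum_succ_eq_sum_Iic] using h.1 k

theorem MajNO.partialSum_last_eq {a b : Fin n → ℝ} (h : MajNO a b) :
    Fin.partialSum a (Fin.last n) = Fin.partialSum b (Fin.last n) := by
  simpa only [partialSum_last] using h.2

theorem upwardTransport_increments {F G : Fin (n + 1) → ℝ} {i j : Fin n}
    (hij : i.succ = j.castSucc) (hle : G i.succ ≤ F i.succ) (hne : ∀ m ≠ i.succ, F m = G m) :
    UpwardTransport (increments F) (increments G) := by
  have hlt : i < j := by rw [← Fin.castSucc_lt_castSucc_iff, ← hij]; exact i.castSucc_lt_succ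
  have hleft : F i.castSucc = G i.castSucc := hne _ i.castSucc_lt_succ.ne
  have hright : F j.succ = G j.succ := hne _ (hij ▸ j.castSucc_lt_succ.ne')
  refine ⟨i, j, hlt, fun k hki hkj => ?_, ?_, ?_⟩
  · have hsucc : F k.succ = G k.succ := hne _ fun h => hki (Fin.succ_injective n h)
    have hcast : F k.castSucc = G k.castSucc :=
      hne _ fun h => hkj (Fin.castSucc_injective n (h.trans hij))
    rw [increments, increments, hsucc, hcast]
  · simp only [increments, ← hij, hleft, hright]
    ring
  · simpa only [increments, hleft, sub_le_sub_iff_right] using hle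

theorem upwardTransport_increments_splice {F G : Fin (n + 1) → ℝ} (hle : G ≤ F) {l : ℕ}
    (hl : 1 ≤ l) (hln : l < n) :
    UpwardTransport (increments (splice F G l)) (increments (splice F G (l + 1))) := by
  obtain ⟨p, rfl⟩ := Nat.exists_eq_add_of_le' hl
  let i : Fin n := ⟨p, by lia⟩
  let j : Fin n := ⟨p + 1, hln⟩
  have hi : i.succ.val = p + 1 := rfl
  have hij : i.succ = j.castSucc := rfl
  refine upwardTransport_increments hij ?_ fun m hm => ?_
  · rw [splice_of_lt (hi.trans_lt (Nat.lt_succ_self _)), splice_of_le hi.ge]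
    exact hle _
  · exact (splice_succ_of_ne fun h => hm (Fin.ext (h.trans hi.symm))).symm

end Transport

/-- Lemma 6.5 (`lm:seq`): if `a ≽ₙₒ b`, there is a finite chain `w¹ = a, …, w^L = b`
in which each vector is an upward transport of the next. -/
theorem majNO_chain_upwardTransport {n : ℕ} (a b : Fin n → ℝ) (h : MajNO a b) :
    ∃ (L : ℕ) (w : ℕ → Fin n → ℝ), 1 ≤ L ∧ w 1 = a ∧ w L = b ∧
      ∀ l, 1 ≤ l → l ≤ L - 1 → UpwardTransport (w l) (w (l + 1)) := by
  let A := Fin.partialSum a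
  let B := Fin.partialSum b
  have hzero : A 0 = B 0 := by simp only [A, B, Fin.partialSum_zero]
  have hlast : A (Fin.last n) = B (Fin.last n) := h.partialSum_last_eq
  refine ⟨max n 1, fun l => increments (splice A B l), le_max_right n 1, ?_, ?_, ?_⟩
  · change increments (splice A B 1) = a
    rw [splice_one_eq_left hzero, increments_partialSum]
  · change increments (splice A B (max n 1)) = b
    rw [splice_eq_right_of_le hlast (le_max_left n 1), increments_partialSum]
  · exact fun l hl hlL => upwardTransport_increments_splice h.partialSum_le hl (by lia)
end

section
/- Let a ∈ ℝⁿ have pairwise distinct entries. Then there exists δ > 0 such that for all b₁, b₂ ∈ ℝⁿ with b₁ + b₂ = 2a and ‖b₁ − b₂‖ < δ (Euclidean norm), if both b₁ weakly majorizes a and b₂ weakly majorizes a, then b₁ = b₂ = a. -/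
open Finset

/-- The sum of the `k` largest entries of `a`, expressed as the supremum of the
sums of `a` over subsets of cardinality `k`. -/
noncomputable def sumTopK {n : ℕ} (a : Fin n → ℝ) (k : ℕ) : ℝ :=
  sSup {x : ℝ | ∃ s : Finset (Fin n), s.card = k ∧ x = ∑ i ∈ s, a i}

/-- `a` weakly majorizes `b`: for every `k = 1, …, n`, the sum of the `k` largest
entries of `a` is at least the sum of the `k` largest entries of `b`. -/
def WeakMaj {n : ℕ} (a b : Fin n → ℝ) : Prop :=
  ∀ k : ℕ, 1 ≤ k → k ≤ n → sumTopK b k ≤ sumTopK a k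

/-!
Near a vector `a` with distinct entries, no strict inequality between entries of `a` is reversed,
so the positions of the `k` largest entries of `a` also carry the `k` largest entries of every
nearby `b`. For `b₁` and `b₂` near `a`, weak majorization therefore bounds from below the sums of
`b₁` and of `b₂` over these positions by the same sum of `a`; as `b₁ + b₂ = 2a`, both bounds are
equalities. Differences of consecutive such sums recover the individual entries.
-/

section TopSet

variable {ι M : Type*}

/-- The finite set of indices `U` carries the `#U` largest entries of `c`. Ties are allowed, so
`c` may have several top sets of the same cardinality. -/
def IsTopSet [LE M] (c : ι → M) (U : Finset ι) : Prop :=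
  ∀ i ∈ U, ∀ j ∉ U, c j ≤ c i

theorem isTopSet_filter_lt [Fintype ι] [LinearOrder M] (c : ι → M) (t : M) :
    IsTopSet c {j | t < c j} := by
  intro i hi j hj
  rw [mem_filter_univ] at hi hj
  exact (not_lt.1 hj).trans hi.le

theorem isTopSet_filter_le [Fintype ι] [LinearOrder M] (c : ι → M) (t : M) :
    IsTopSet c {j | t ≤ c j} := by
  intro i hi j hj
  rw [mem_filter_univ] at hi hj
  exact (not_le.1 hj).le.trans hi

theorem IsTopSet.of_monovary [PartialOrder M] {N : Type*} [Preorder N] {a : ι → M} {b : ι → N}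
    {U : Finset ι} (hU : IsTopSet a U) (ha : Function.Injective a) (hab : Monovary b a) :
    IsTopSet b U :=
  fun i hi j hj => hab ((hU i hi j hj).lt_of_ne (ha.ne (ne_of_mem_of_not_mem hi hj).symm))

theorem IsTopSet.sum_le_sum_of_card_eq [AddCommMonoid M] [PartialOrder M]
    [IsOrderedCancelAddMonoid M] {c : ι → M} {U s : Finset ι} (hU : IsTopSet c U)
    (hs : #s = #U) : ∑ i ∈ s, c i ≤ ∑ i ∈ U, c i := by
  classical
  let e : ↥(s \ U) ≃ ↥(U \ s) := equivOfCardEq (card_sdiff_comm hs)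
  have le_apply_e (i : ↥(s \ U)) : c i ≤ c (e i) :=
    hU _ (mem_sdiff.1 (e i).2).1 _ (mem_sdiff.1 i.2).2
  rw [← sum_sdiff_le_sum_sdiff]
  calc ∑ i ∈ s \ U, c i = ∑ i : ↥(s \ U), c i := (sum_coe_sort _ _).symm
    _ ≤ ∑ i, c (e i) := sum_le_sum fun i _ => le_apply_e i
    _ = ∑ i : ↥(U \ s), c i := e.sum_comp fun i => c i
    _ = ∑ i ∈ U \ s, c i := sum_coe_sort _ _

theorem eq_of_forall_isTopSet_sum_eq [Finite ι] [LinearOrder M] {N : Type*} [AddCommMonoid N]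
    [IsRightCancelAdd N] {a : ι → M} (ha : Function.Injective a) {f g : ι → N}
    (h : ∀ U, IsTopSet a U → ∑ i ∈ U, f i = ∑ i ∈ U, g i) : f = g := by
  classical
  cases nonempty_fintype ι
  ext i
  have filter_le_eq : ({j | a i ≤ a j} : Finset ι) = insert i ({j | a i < a j} : Finset ι) := by
    ext j
    simp [le_iff_eq_or_lt, ha.eq_iff, eq_comm]
  have sum_le_eq := h _ (isTopSet_filter_le a (a i))
  rw [filter_le_eq, sum_insert (by simp), sum_insert (by simp),
    h _ (isTopSet_filter_lt a (a i))] at sum_le_eq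
  exact add_right_cancel sum_le_eq

end TopSet

theorem eventually_nhds_monovary {ι M : Type*} [Finite ι] [LinearOrder M] [TopologicalSpace M]
    [OrderClosedTopology M] (a : ι → M) : ∀ᶠ b in nhds a, Monovary b a := by
  simp only [Monovary, Filter.eventually_all]
  intro i j hij
  filter_upwards [(continuousAt_apply i a).eventually_lt (continuousAt_apply j a) hij]
    with b hb using hb.le

section WeakMaj

variable {n : ℕ}

theorem IsTopSet.sumTopK_card {c : Fin n → ℝ} {U : Finset (Fin n)} (hU : IsTopSet c U) :
    sumTopK c #U = ∑ i ∈ U, c i := by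
  refine IsGreatest.csSup_eq ⟨⟨U, rfl, rfl⟩, ?_⟩
  rintro _ ⟨s, hs, rfl⟩
  exact hU.sum_le_sum_of_card_eq hs

theorem WeakMaj.sum_le_sum {a b : Fin n → ℝ} (h : WeakMaj b a) {U : Finset (Fin n)}
    (haU : IsTopSet a U) (hbU : IsTopSet b U) : ∑ i ∈ U, a i ≤ ∑ i ∈ U, b i := by
  rcases U.eq_empty_or_nonempty with rfl | hU
  · simp
  · rw [← haU.sumTopK_card, ← hbU.sumTopK_card]
    exact h #U hU.card_pos (card_finset_fin_le U)

theorem eq_of_add_eq_two_smul_of_weakMaj {a b₁ b₂ : Fin n → ℝ} (ha : Function.Injective a)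
    (hsum : b₁ + b₂ = (2 : ℝ) • a) (hmono₁ : Monovary b₁ a) (hmono₂ : Monovary b₂ a)
    (hmaj₁ : WeakMaj b₁ a) (hmaj₂ : WeakMaj b₂ a) : b₁ = a := by
  refine eq_of_forall_isTopSet_sum_eq ha fun U hU => ?_
  have le_sum₁ := hmaj₁.sum_le_sum hU (hU.of_monovary ha hmono₁)
  have le_sum₂ := hmaj₂.sum_le_sum hU (hU.of_monovary ha hmono₂)
  have sum_add : ∑ i ∈ U, b₁ i + ∑ i ∈ U, b₂ i = 2 * ∑ i ∈ U, a i := by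
    rw [← sum_add_distrib, mul_sum]
    exact sum_congr rfl fun i _ => congrFun hsum i
  linarith

end WeakMaj

/-- Lemma 6.2 (`lm:notie`): if `a` has pairwise distinct entries, then for `b₁, b₂`
with `b₁ + b₂ = 2a` close enough to each other, `b₁ ≽_w a` and `b₂ ≽_w a` force
`b₁ = b₂ = a`. -/
theorem no_tie_weakMaj {n : ℕ} (a : EuclideanSpace ℝ (Fin n))
    (ha : Function.Injective a) :
    ∃ δ > 0, ∀ b₁ b₂ : EuclideanSpace ℝ (Fin n),
      b₁ + b₂ = (2 : ℝ) • a → ‖b₁ - b₂‖ < δ →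
      WeakMaj b₁ a → WeakMaj b₂ a → b₁ = a ∧ b₂ = a := by
  obtain ⟨ε, hε, hmono⟩ := Metric.eventually_nhds_iff.1 <|
    (PiLp.continuous_ofLp 2 _).continuousAt.eventually (eventually_nhds_monovary a.ofLp)
  refine ⟨2 * ε, by positivity, fun b₁ b₂ hsum hdist hmaj₁ hmaj₂ => ?_⟩
  have hmid : midpoint ℝ b₁ b₂ = a := by
    rw [midpoint_eq_smul_add, hsum, invOf_smul_smul]
  have hsum' : b₁.ofLp + b₂.ofLp = (2 : ℝ) • a.ofLp := congrArg WithLp.ofLp hsum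
  have hmono₁ : Monovary b₁ a := hmono <| by
    rw [← hmid, dist_left_midpoint, dist_eq_norm, Real.norm_two]
    linarith
  have hmono₂ : Monovary b₂ a := hmono <| by
    rw [← hmid, dist_right_midpoint, dist_eq_norm, Real.norm_two]
    linarith
  constructor <;> apply WithLp.ofLp_injective
  · exact eq_of_add_eq_two_smul_of_weakMaj ha hsum' hmono₁ hmono₂ hmaj₁ hmaj₂
  · exact eq_of_add_eq_two_smul_of_weakMaj ha (by rwa [add_comm]) hmono₂ hmono₁ hmaj₂ hmaj₁
end

section
/- (Hardy–Littlewood–Pólya) Let a, b ∈ ℝⁿ. (a) The inequality ∑_{i=1}^n h(aᵢ) ≥ ∑_{i=1}^n h(bᵢ) holds for every nondecreasing convex function h : ℝ → ℝ if and only if a weakly majorizes b. (b) The same inequality holds for every convex function h : ℝ → ℝ if and only if a majorizes b. -/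
open Finset

/-- `a` majorizes `b`: weak majorization together with equality of total sums. -/
def Maj {n : ℕ} (a b : Fin n → ℝ) : Prop :=
  WeakMaj a b ∧ ∑ i, a i = ∑ i, b i

/-!
Order `a` and `b` decreasingly, so that weak majorization says that the partial sums of `a - b` are
nonnegative. Then `∑ h aᵢ - ∑ h bᵢ = ∑ cᵢ (aᵢ - bᵢ)`, where `cᵢ` is the slope of the chord of `h`
between `bᵢ` and `aᵢ`. By convexity `c` is antitone, so Abel summation bounds this sum below by
`t * ∑ (aᵢ - bᵢ)` for every lower bound `t` of `c`. If `h` is monotone, take `t = 0`; if the totals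
agree, any `t` will do.

Conversely, the sum of the `k` largest entries of `a` is the minimum over `t` of
`∑ (aᵢ - t)⁺ + k * t`, attained when `t` is the `k`-th largest entry, and `x ↦ (x - t)⁺` is convex
and nondecreasing. Applying the inequality to `x ↦ x` and `x ↦ -x` yields equality of the totals.
-/

theorem mul_sum_le_sum_mul_of_antitoneOn {ι R : Type*} [LinearOrder ι] [Semiring R]
    [PartialOrder R] [IsOrderedRing R] {s : Finset ι} {c d : ι → R} {t : R}
    (hc : AntitoneOn c s) (hd : ∀ i ∈ s, 0 ≤ ∑ j ∈ s with j ≤ i, d j) (ht : ∀ i ∈ s, t ≤ c i) :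
    t * ∑ i ∈ s, d i ≤ ∑ i ∈ s, c i * d i := by
  induction s using Finset.induction_on_max generalizing t with
  | empty => simp
  | insert m s hm ih =>
    have hms : m ∉ s := fun h ↦ (hm m h).false
    have total_nonneg : 0 ≤ ∑ i ∈ insert m s, d i := by
      have filter_le_eq : {j ∈ insert m s | j ≤ m} = insert m s :=
        filter_true_of_mem (forall_mem_insert .. |>.2 ⟨le_rfl, fun j hj ↦ (hm j hj).le⟩)
      simpa only [filter_le_eq] using hd m (mem_insert_self m s)
    have partialSum_nonneg (i) (hi : i ∈ s) : 0 ≤ ∑ j ∈ s with j ≤ i, d j := by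
      simpa only [filter_insert, (hm i hi).not_ge, if_false] using hd i (mem_insert_of_mem hi)
    have last_le (i) (hi : i ∈ s) : c m ≤ c i :=
      hc (mem_insert_of_mem hi) (mem_insert_self m s) (hm i hi).le
    calc
      t * ∑ i ∈ insert m s, d i
      _ ≤ c m * ∑ i ∈ insert m s, d i :=
        mul_le_mul_of_nonneg_right (ht m (mem_insert_self m s)) total_nonneg
      _ = c m * d m + c m * ∑ i ∈ s, d i := by rw [sum_insert hms, mul_add]
      _ ≤ c m * d m + ∑ i ∈ s, c i * d i := by
        gcongr
        exact ih (hc.mono (coe_subset.2 (subset_insert m s))) partialSum_nonneg last_le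
      _ = ∑ i ∈ insert m s, c i * d i := by rw [sum_insert hms]

section ConvexOn

variable {𝕜 : Type*} [Field 𝕜] [LinearOrder 𝕜] [IsStrictOrderedRing 𝕜] {s : Set 𝕜} {h : 𝕜 → 𝕜}

theorem slope_le_slope_of_convexOn {x x' y y' : 𝕜} (hh : ConvexOn 𝕜 s h) (hx : x ∈ s)
    (hx' : x' ∈ s) (hy : y ∈ s) (hy' : y' ∈ s) (hxx' : x ≤ x') (hyy' : y ≤ y') (hxy : x ≠ y)
    (hxy' : x' ≠ y') : slope h x y ≤ slope h x' y' := by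
  by_cases heq : x = y'
  · have hyx' : y ≠ x' := fun h ↦ hxy (le_antisymm (hxx'.trans h.ge) (hyy'.trans heq.ge))
    calc
      slope h x y = slope h y x := slope_comm h x y
      _ ≤ slope h y x' := hh.slope_mono hy ⟨hx, hxy⟩ ⟨hx', hyx'.symm⟩ hxx'
      _ = slope h x' y := slope_comm h y x'
      _ ≤ slope h x' y' := hh.slope_mono hx' ⟨hy, hyx'⟩ ⟨hy', hxy'.symm⟩ hyy'
  · calc
      slope h x y ≤ slope h x y' :=
        hh.slope_mono hx ⟨hy, hxy.symm⟩ ⟨hy', Ne.symm heq⟩ hyy'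
      _ = slope h y' x := slope_comm h x y'
      _ ≤ slope h y' x' := hh.slope_mono hy' ⟨hx, heq⟩ ⟨hx', hxy'⟩ hxx'
      _ = slope h x' y' := slope_comm h y' x'

theorem mul_sum_sub_le_sum_sub_of_convexOn {ι : Type*} [LinearOrder ι] [Fintype ι] {a b : ι → 𝕜}
    {t : 𝕜} (hh : ConvexOn 𝕜 s h) (has : ∀ i, a i ∈ s) (hbs : ∀ i, b i ∈ s) (ha : Antitone a)
    (hb : Antitone b) (hab : ∀ i, ∑ j with j ≤ i, b j ≤ ∑ j with j ≤ i, a j)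
    (ht : ∀ i, a i ≠ b i → t ≤ slope h (b i) (a i)) :
    t * ∑ i, (a i - b i) ≤ ∑ i, (h (a i) - h (b i)) := by
  -- Where `a i = b i`, the slope is the junk value `0`, which would spoil antitonicity.
  let s₀ : Finset ι := {i | a i ≠ b i}
  have slope_antitoneOn : AntitoneOn (fun i ↦ slope h (b i) (a i)) s₀ := fun i hi j hj hij ↦
    slope_le_slope_of_convexOn hh (hbs j) (hbs i) (has j) (has i) (hb hij) (ha hij)
      (mem_filter.1 hj).2.symm (mem_filter.1 hi).2.symm
  have partialSum_nonneg (i) : 0 ≤ ∑ j ∈ s₀ with j ≤ i, (a j - b j) := by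
    rw [filter_comm, sum_filter_of_ne fun _ _ ↦ sub_ne_zero.1, sum_sub_distrib]
    exact sub_nonneg.2 (hab i)
  calc
    t * ∑ i, (a i - b i) = t * ∑ i ∈ s₀, (a i - b i) := by
      rw [sum_filter_of_ne fun _ _ ↦ sub_ne_zero.1]
    _ ≤ ∑ i ∈ s₀, slope h (b i) (a i) * (a i - b i) :=
      mul_sum_le_sum_mul_of_antitoneOn slope_antitoneOn (fun i _ ↦ partialSum_nonneg i)
        fun i hi ↦ ht i (mem_filter.1 hi).2
    _ = ∑ i, slope h (b i) (a i) * (a i - b i) :=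
      sum_filter_of_ne fun _ _ hne ↦ sub_ne_zero.1 (right_ne_zero_of_mul hne)
    _ = ∑ i, (h (a i) - h (b i)) := by
      simp only [mul_comm (slope _ _ _), ← smul_eq_mul, sub_smul_slope, vsub_eq_sub]

theorem convexOn_posPart_sub (hs : Convex 𝕜 s) (t : 𝕜) : ConvexOn 𝕜 s fun x ↦ (x - t)⁺ :=
  ((convexOn_id hs).sub (concaveOn_const t hs)).sup (convexOn_const 0 hs)

end ConvexOn

section PosPart

variable {ι R : Type*} [Fintype ι] [AddCommGroup R] [LinearOrder R] [IsOrderedAddMonoid R]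

theorem sum_le_sum_posPart_add_card_nsmul (a : ι → R) (s : Finset ι) (t : R) :
    ∑ i ∈ s, a i ≤ ∑ i, (a i - t)⁺ + #s • t := by
  calc
    ∑ i ∈ s, a i = ∑ i ∈ s, (a i - t) + #s • t := by simp
    _ ≤ ∑ i ∈ s, (a i - t)⁺ + #s • t := by gcongr; exact le_posPart _
    _ ≤ ∑ i, (a i - t)⁺ + #s • t := by
      gcongr
      exact subset_univ s

theorem sum_posPart_add_card_nsmul_of_antitone [LinearOrder ι] {a : ι → R} (ha : Antitone a)
    (i : ι) : ∑ j, (a j - a i)⁺ + #{j | j ≤ i} • a i = ∑ j with j ≤ i, a j := by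
  have posPart_eq (j) : (a j - a i)⁺ = if j ≤ i then a j - a i else 0 := by
    split_ifs with hji
    · exact posPart_eq_self.2 (sub_nonneg.2 (ha hji))
    · exact posPart_eq_zero.2 (sub_nonpos.2 (ha (not_le.1 hji).le))
  simp [posPart_eq, ← sum_filter]

end PosPart

theorem exists_perm_antitone_comp {n : ℕ} {α : Type*} [LinearOrder α] (f : Fin n → α) :
    ∃ σ : Equiv.Perm (Fin n), Antitone (f ∘ σ) :=
  ⟨Tuple.sort (OrderDual.toDual ∘ f), Tuple.monotone_sort (OrderDual.toDual ∘ f)⟩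

section SumTopK

variable {n : ℕ} {a b : Fin n → ℝ} {σ τ : Equiv.Perm (Fin n)}

theorem sum_le_sumTopK (a : Fin n → ℝ) (s : Finset (Fin n)) : ∑ i ∈ s, a i ≤ sumTopK a #s := by
  refine le_csSup (Set.Finite.bddAbove ?_) ⟨s, rfl, rfl⟩
  refine (Set.finite_range fun s : Finset (Fin n) ↦ ∑ i ∈ s, a i).subset ?_
  rintro x ⟨s, -, rfl⟩
  exact ⟨s, rfl⟩

theorem sumTopK_le_sum_posPart_add_nsmul (a : Fin n → ℝ) {k : ℕ} (hk : k ≤ n) (t : ℝ) :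
    sumTopK a k ≤ ∑ i, (a i - t)⁺ + k • t := by
  obtain ⟨s, -, hs⟩ := exists_subset_card_eq (s := (univ : Finset (Fin n))) (by simpa using hk)
  refine csSup_le ⟨_, s, hs, rfl⟩ ?_
  rintro x ⟨s, rfl, rfl⟩
  exact sum_le_sum_posPart_add_card_nsmul a s t

theorem partialSum_comp_perm_eq_sum_posPart (hσ : Antitone (a ∘ σ)) (i : Fin n) :
    ∑ j with j ≤ i, a (σ j) = ∑ j, (a j - a (σ i))⁺ + (i + 1 : ℕ) • a (σ i) := by
  have card_filter_le : #{j | j ≤ i} = (i + 1 : ℕ) := by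
    rw [filter_ge_eq_Iic, Fin.card_Iic]
  rw [← Equiv.sum_comp σ fun j ↦ (a j - a (σ i))⁺, ← card_filter_le]
  exact (sum_posPart_add_card_nsmul_of_antitone hσ i).symm

theorem sumTopK_add_one_eq_partialSum (hσ : Antitone (a ∘ σ)) (i : Fin n) :
    sumTopK a (i + 1) = ∑ j with j ≤ i, a (σ j) := by
  refine le_antisymm ?_ ?_
  · rw [partialSum_comp_perm_eq_sum_posPart hσ]
    exact sumTopK_le_sum_posPart_add_nsmul a i.isLt (a (σ i))
  · simpa [filter_ge_eq_Iic] using sum_le_sumTopK a ((Iic i).map σ.toEmbedding)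

theorem weakMaj_iff_sumTopK_add_one_le :
    WeakMaj a b ↔ ∀ i : Fin n, sumTopK b (i + 1) ≤ sumTopK a (i + 1) := by
  refine ⟨fun hab i ↦ hab (i + 1) (Nat.le_add_left 1 i) i.isLt, fun hab k hk hkn ↦ ?_⟩
  simpa only [Nat.sub_add_cancel hk] using hab ⟨k - 1, by lia⟩

theorem weakMaj_iff_partialSum_le (hσ : Antitone (a ∘ σ)) (hτ : Antitone (b ∘ τ)) :
    WeakMaj a b ↔ ∀ i, ∑ j with j ≤ i, b (τ j) ≤ ∑ j with j ≤ i, a (σ j) := by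
  simp only [weakMaj_iff_sumTopK_add_one_le, sumTopK_add_one_eq_partialSum hσ,
    sumTopK_add_one_eq_partialSum hτ]

theorem weakMaj_of_sum_posPart_le (hab : ∀ t, ∑ i, (b i - t)⁺ ≤ ∑ i, (a i - t)⁺) :
    WeakMaj a b := by
  obtain ⟨σ, hσ⟩ := exists_perm_antitone_comp a
  refine weakMaj_iff_sumTopK_add_one_le.2 fun i ↦ ?_
  calc
    sumTopK b (i + 1) ≤ ∑ j, (b j - a (σ i))⁺ + (i + 1 : ℕ) • a (σ i) :=
      sumTopK_le_sum_posPart_add_nsmul b i.isLt (a (σ i))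
    _ ≤ ∑ j, (a j - a (σ i))⁺ + (i + 1 : ℕ) • a (σ i) := add_le_add (hab (a (σ i))) le_rfl
    _ = ∑ j with j ≤ i, a (σ j) := (partialSum_comp_perm_eq_sum_posPart hσ i).symm
    _ = sumTopK a (i + 1) := (sumTopK_add_one_eq_partialSum hσ i).symm

theorem WeakMaj.mul_sum_sub_le_sum_sub {s : Set ℝ} {h : ℝ → ℝ} {t : ℝ} (hab : WeakMaj a b)
    (hh : ConvexOn ℝ s h) (has : ∀ i, a i ∈ s) (hbs : ∀ i, b i ∈ s)
    (ht : ∀ i j, t ≤ slope h (b i) (a j)) :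
    t * (∑ i, a i - ∑ i, b i) ≤ ∑ i, h (a i) - ∑ i, h (b i) := by
  obtain ⟨σ, hσ⟩ := exists_perm_antitone_comp a
  obtain ⟨τ, hτ⟩ := exists_perm_antitone_comp b
  have sorted := mul_sum_sub_le_sum_sub_of_convexOn hh (fun i ↦ has (σ i)) (fun i ↦ hbs (τ i))
    hσ hτ ((weakMaj_iff_partialSum_le hσ hτ).1 hab) fun i _ ↦ ht (τ i) (σ i)
  simpa only [sum_sub_distrib, Function.comp_apply, Equiv.sum_comp σ a, Equiv.sum_comp τ b,
    Equiv.sum_comp σ fun i ↦ h (a i), Equiv.sum_comp τ fun i ↦ h (b i)] using sorted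

theorem WeakMaj.sum_le_sum_of_monotoneOn {s : Set ℝ} {h : ℝ → ℝ} (hab : WeakMaj a b)
    (hh : ConvexOn ℝ s h) (hmono : MonotoneOn h s) (has : ∀ i, a i ∈ s) (hbs : ∀ i, b i ∈ s) :
    ∑ i, h (b i) ≤ ∑ i, h (a i) := by
  simpa using hab.mul_sum_sub_le_sum_sub hh has hbs fun i j ↦ hmono.slope_nonneg (hbs i) (has j)

theorem Maj.sum_le_sum {s : Set ℝ} {h : ℝ → ℝ} (hab : Maj a b) (hh : ConvexOn ℝ s h)
    (has : ∀ i, a i ∈ s) (hbs : ∀ i, b i ∈ s) : ∑ i, h (b i) ≤ ∑ i, h (a i) := by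
  obtain ⟨t, ht⟩ := (Set.finite_range fun p : Fin n × Fin n ↦ slope h (b p.1) (a p.2)).bddBelow
  simpa [hab.2] using hab.1.mul_sum_sub_le_sum_sub hh has hbs fun i j ↦ ht ⟨(i, j), rfl⟩

end SumTopK

theorem hardy_littlewood_polya_general {n : ℕ} {s : Set ℝ} (hs : Convex ℝ s) {a b : Fin n → ℝ}
    (has : ∀ i, a i ∈ s) (hbs : ∀ i, b i ∈ s) :
    ((∀ h : ℝ → ℝ, ConvexOn ℝ s h → MonotoneOn h s → ∑ i, h (b i) ≤ ∑ i, h (a i)) ↔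
      WeakMaj a b) ∧
    ((∀ h : ℝ → ℝ, ConvexOn ℝ s h → ∑ i, h (b i) ≤ ∑ i, h (a i)) ↔ Maj a b) := by
  have weakMaj_of_sum_le
      (H : ∀ h : ℝ → ℝ, ConvexOn ℝ s h → MonotoneOn h s → ∑ i, h (b i) ≤ ∑ i, h (a i)) :
      WeakMaj a b :=
    weakMaj_of_sum_posPart_le fun t ↦ H _ (convexOn_posPart_sub hs t) <|
      Monotone.monotoneOn (fun _ _ hxy ↦ posPart_mono (sub_le_sub_right hxy t)) s
  refine ⟨⟨weakMaj_of_sum_le, fun hab h hh hmono ↦ hab.sum_le_sum_of_monotoneOn hh hmono has hbs⟩,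
    fun H ↦ ⟨weakMaj_of_sum_le fun h hh _ ↦ H h hh, le_antisymm ?_ ?_⟩,
    fun hab h hh ↦ hab.sum_le_sum hh has hbs⟩
  · simpa using H (fun x ↦ -x) (concaveOn_id hs).neg
  · exact H id (convexOn_id hs)

/-- Lemma 6.1: the Hardy–Littlewood–Pólya inequality, characterizing (weak)
majorization via sums of (nondecreasing) convex functions. -/
theorem hardy_littlewood_polya {n : ℕ} (a b : Fin n → ℝ) :
    ((∀ h : ℝ → ℝ, ConvexOn ℝ Set.univ h → Monotone h →
        ∑ i, h (b i) ≤ ∑ i, h (a i)) ↔ WeakMaj a b) ∧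
    ((∀ h : ℝ → ℝ, ConvexOn ℝ Set.univ h →
        ∑ i, h (b i) ≤ ∑ i, h (a i)) ↔ Maj a b) := by
  simpa only [monotoneOn_univ] using
    hardy_littlewood_polya_general convex_univ (fun i ↦ Set.mem_univ (a i))
      fun i ↦ Set.mem_univ (b i)
end

section
/- Let R ∈ ℝⁿ and let S₂ ⊆ S₁ ⊆ ℝⁿ be nonempty closed convex cones both containing R. Let z be a random vector in ℝⁿ whose coordinates are i.i.d. normal N(0, σ²), and write R̂_{S}(σ) for the metric projection of R + z onto S. Assume E‖R̂_{S₁}(σ) − R‖² > 0 for all σ > 0. Then limsup_{σ → 0} (E‖R̂_{S₂}(σ) − R‖²)/(E‖R̂_{S₁}(σ) − R‖²) ≤ 1 and limsup_{σ → ∞} (E‖R̂_{S₂}(σ) − R‖²)/(E‖R̂_{S₁}(σ) − R‖²) ≤ 1. -/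
open MeasureTheory ProbabilityTheory Filter

/-- The law of a vector in `ℝⁿ` with i.i.d. `N(0, σ²)` coordinates. -/
noncomputable def gaussVec (n : ℕ) (σ : ℝ) : Measure (Fin n → ℝ) :=
  Measure.pi fun _ => gaussianReal 0 ((σ ^ 2).toNNReal)

/-!
Projection onto a cone is positively homogeneous, so the risk at noise level `σ` and truth `R` is
`σ ^ 2` times the risk at unit noise and truth `σ⁻¹ • R`; the factor `σ ^ 2` cancels in the ratio.
Recentred at the truth `t • R`, the projection onto a cone `C` is the projection onto the translate
`C - t • R`. As `t → 0` these projections converge pointwise to the projection onto `C`; as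
`t → ∞` the translates increase and the projections converge to the one onto the tangent cone of
`C` at `R`. By dominated convergence each risk tends to the second moment of a projection onto the
limiting cone, and nested cones have nested limits, on which the norm of the projection is monotone.
-/

open scoped Topology RealInnerProductSpace

section Cone

variable {V : Type*} [AddCommGroup V] [Module ℝ V]

theorem exists_pointedCone_coe_eq {S : Set V} (hne : S.Nonempty) (hconv : Convex ℝ S)
    (hcone : ∀ x ∈ S, ∀ c : ℝ, 0 ≤ c → c • x ∈ S) : ∃ C : PointedCone ℝ V, (C : Set V) = S := by
  refine ⟨.ofConeComb S hne fun x hx y hy a ha b hb ↦ ?_, rfl⟩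
  have h := hconv (hcone x hx (2 * a) (by positivity)) (hcone y hy (2 * b) (by positivity))
    (a := 1 / 2) (b := 1 / 2) (by norm_num) (by norm_num) (by norm_num)
  rwa [smul_smul, smul_smul, ← mul_assoc, ← mul_assoc, one_div, inv_mul_cancel₀ two_ne_zero,
    one_mul, one_mul] at h

theorem monotone_preimage_smul_add {C : PointedCone ℝ V} {R : V} (hR : R ∈ C) :
    Monotone fun t : ℝ ↦ (t • R + ·) ⁻¹' (C : Set V) := by
  intro s t hst x (hx : s • R + x ∈ C)
  have h := C.add_mem (C.smul_mem (sub_nonneg.2 hst) hR) hx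
  rwa [show (t - s) • R + (s • R + x) = t • R + x by module] at h

variable [TopologicalSpace V] [ContinuousAdd V] [ContinuousConstSMul ℝ V]

/-- The tangent cone of `C` at `R`: the closure of the cone generated by `C` and the line through
`R`. For `R ∈ C` this is the closed cone of feasible directions of `C` at `R`. -/
def coneTangentAt (C : PointedCone ℝ V) (R : V) : PointedCone ℝ V :=
  (C ⊔ PointedCone.ofSubmodule (ℝ ∙ R)).closure

theorem le_coneTangentAt (C : PointedCone ℝ V) (R : V) : C ≤ coneTangentAt C R :=
  le_sup_left.trans subset_closure

theorem coneTangentAt_mono {C₁ C₂ : PointedCone ℝ V} (h : C₁ ≤ C₂) (R : V) :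
    coneTangentAt C₁ R ≤ coneTangentAt C₂ R :=
  closure_mono (sup_le_sup_right h _)

theorem coe_coneTangentAt (C : PointedCone ℝ V) (R : V) :
    (coneTangentAt C R : Set V) = closure (⋃ t : ℝ, (t • R + ·) ⁻¹' (C : Set V)) := by
  refine congrArg closure (Set.ext fun x ↦ ?_)
  simp only [SetLike.mem_coe, Submodule.mem_sup, PointedCone.mem_ofSubmodule_iff,
    Submodule.mem_span_singleton, Set.mem_iUnion, Set.mem_preimage]
  constructor
  · rintro ⟨y, hy, _, ⟨t, rfl⟩, rfl⟩
    exact ⟨-t, by simpa using hy⟩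
  · rintro ⟨t, ht⟩
    exact ⟨t • R + x, ht, -t • R, ⟨-t, rfl⟩, by module⟩

end Cone

variable {E : Type*} [NormedAddCommGroup E]

/-- `P` maps every point to a point of `S` at minimum distance, i.e. `P` is a metric projection
onto `S`. -/
def IsMetricProjection (P : E → E) (S : Set E) : Prop :=
  ∀ y, P y ∈ S ∧ ∀ r ∈ S, ‖y - P y‖ ≤ ‖y - r‖

/-- The mean squared error of the estimator `P` of `θ` from the observation `θ + z`, where the
noise `z` has law `μ`. -/
noncomputable def quadraticRisk [MeasurableSpace E] (μ : Measure E) (P : E → E) (θ : E) : ℝ :=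
  ∫ z, ‖P (θ + z) - θ‖ ^ 2 ∂μ

namespace IsMetricProjection

variable {S : Set E} {P : E → E}

theorem apply_of_mem (hP : IsMetricProjection P S) {x : E} (hx : x ∈ S) : P x = x := by
  have h := (hP x).2 x hx
  rw [sub_self, norm_zero, norm_le_zero_iff, sub_eq_zero] at h
  exact h.symm

theorem recenter (hP : IsMetricProjection P S) (v : E) :
    IsMetricProjection (fun z ↦ P (v + z) - v) ((v + ·) ⁻¹' S) := by
  refine fun z ↦ ⟨by simpa using (hP (v + z)).1, fun r hr ↦ ?_⟩
  have h := (hP (v + z)).2 (v + r) hr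
  rwa [add_sub_add_left_eq_sub, show v + z - P (v + z) = z - (P (v + z) - v) by abel] at h

theorem nontrivial_of_quadraticRisk_pos [MeasurableSpace E] {μ : Measure E} {θ : E}
    (hP : IsMetricProjection P S) (hθ : θ ∈ S) (hpos : 0 < quadraticRisk μ P θ) :
    S.Nontrivial := by
  by_contra hS
  have hconst : ∀ y, P y = θ := fun y ↦ Set.not_nontrivial_iff.1 hS (hP y).1 hθ
  simp [quadraticRisk, hconst] at hpos

end IsMetricProjection

variable [InnerProductSpace ℝ E]

theorem exists_isMetricProjection [CompleteSpace E] {S : Set E} (hne : S.Nonempty)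
    (hcl : IsClosed S) (hS : Convex ℝ S) : ∃ P : E → E, IsMetricProjection P S := by
  choose P hmem hmin using exists_norm_eq_iInf_of_complete_convex hne hcl.isComplete hS
  refine ⟨P, fun y ↦ ⟨hmem y, fun r hr ↦ ?_⟩⟩
  rw [hmin]
  exact ciInf_le ⟨0, Set.forall_mem_range.2 fun _ ↦ norm_nonneg _⟩ (⟨r, hr⟩ : S)

namespace IsMetricProjection

variable {S : Set E} {C : PointedCone ℝ E} {P : E → E}

theorem inner_sub_sub_nonpos (hP : IsMetricProjection P S) (hS : Convex ℝ S) (y : E) {r : E}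
    (hr : r ∈ S) : ⟪y - P y, r - P y⟫ ≤ 0 := by
  have : Nonempty S := ⟨⟨r, hr⟩⟩
  refine (norm_eq_iInf_iff_real_inner_le_zero hS (hP y).1).1 (le_antisymm ?_ ?_) r hr
  · exact le_ciInf fun w ↦ (hP y).2 w w.2
  · exact ciInf_le ⟨0, Set.forall_mem_range.2 fun _ ↦ norm_nonneg _⟩ (⟨P y, (hP y).1⟩ : S)

theorem norm_sub_sq_le (hP : IsMetricProjection P S) (hS : Convex ℝ S) (y : E) {r : E}
    (hr : r ∈ S) : ‖r - P y‖ ^ 2 ≤ ‖y - r‖ ^ 2 - ‖y - P y‖ ^ 2 := by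
  have h := hP.inner_sub_sub_nonpos hS y hr
  rw [show y - r = (y - P y) - (r - P y) by abel, norm_sub_sq_real (y - P y)]
  linarith

theorem eq_of_forall_norm_le (hP : IsMetricProjection P S) (hS : Convex ℝ S) {y p : E}
    (hp : p ∈ S) (hmin : ∀ r ∈ S, ‖y - p‖ ≤ ‖y - r‖) : P y = p := by
  have h := hP.norm_sub_sq_le hS y hp
  have hle : ‖y - p‖ ^ 2 ≤ ‖y - P y‖ ^ 2 := by gcongr; exact hmin _ (hP y).1
  have h0 : ‖p - P y‖ ^ 2 = 0 := le_antisymm (by linarith) (sq_nonneg _)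
  exact (sub_eq_zero.1 (norm_eq_zero.1 (sq_eq_zero_iff.1 h0))).symm

theorem lipschitzWith_one (hP : IsMetricProjection P S) (hS : Convex ℝ S) :
    LipschitzWith 1 P := by
  refine LipschitzWith.mk_one fun x y ↦ ?_
  rw [dist_eq_norm, dist_eq_norm]
  have hx := hP.inner_sub_sub_nonpos hS x (hP y).1
  have hy := hP.inner_sub_sub_nonpos hS y (hP x).1
  have hfirm : ‖P x - P y‖ * ‖P x - P y‖ ≤ ⟪x - y, P x - P y⟫ := by
    rw [← real_inner_self_eq_norm_mul_norm]
    simp only [inner_sub_left, inner_sub_right] at *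
    linarith
  by_contra! hlt
  have hcs := real_inner_le_norm (x - y) (P x - P y)
  nlinarith [norm_nonneg (x - y)]

theorem continuous (hP : IsMetricProjection P S) (hS : Convex ℝ S) : Continuous P :=
  (hP.lipschitzWith_one hS).continuous

theorem norm_le (hP : IsMetricProjection P S) (hS : Convex ℝ S) (h0 : (0 : E) ∈ S) (z : E) :
    ‖P z‖ ≤ ‖z‖ := by
  simpa [hP.apply_of_mem h0] using (hP.lipschitzWith_one hS).dist_le_mul z 0

theorem map_smul_of_pos (hP : IsMetricProjection P C) {c : ℝ} (hc : 0 < c) (y : E) :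
    P (c • y) = c • P y := by
  refine hP.eq_of_forall_norm_le C.convex (C.smul_mem hc.le (hP y).1) fun r hr ↦ ?_
  calc ‖c • y - c • P y‖ = c * ‖y - P y‖ := by
        rw [← smul_sub, norm_smul, Real.norm_of_nonneg hc.le]
    _ ≤ c * ‖y - c⁻¹ • r‖ := by
        gcongr
        exact (hP y).2 _ (C.smul_mem (inv_nonneg.2 hc.le) hr)
    _ = ‖c • y - r‖ := by
        rw [← Real.norm_of_nonneg hc.le, ← norm_smul, Real.norm_of_nonneg hc.le, smul_sub,
          smul_inv_smul₀ hc.ne']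

theorem norm_apply_le_norm_apply (hP : IsMetricProjection P C) {Q : E → E}
    (hQ : IsMetricProjection Q S) (hS : Convex ℝ S) (h0 : (0 : E) ∈ S) (hSC : S ⊆ C) (z : E) :
    ‖Q z‖ ≤ ‖P z‖ := by
  have hpolar : ⟪z - P z, Q z⟫ ≤ 0 := by
    simpa using hP.inner_sub_sub_nonpos C.convex z (C.add_mem (hP z).1 (hSC (hQ z).1))
  have hself : ⟪z - Q z, -Q z⟫ ≤ 0 := by
    simpa using hQ.inner_sub_sub_nonpos hS z h0
  have hsq : ‖Q z‖ * ‖Q z‖ ≤ ‖P z‖ * ‖Q z‖ := by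
    refine le_trans ?_ (real_inner_le_norm (P z) (Q z))
    rw [← real_inner_self_eq_norm_mul_norm]
    simp only [inner_sub_left, inner_neg_right] at hpolar hself
    linarith
  by_contra! hlt
  nlinarith [norm_nonneg (P z)]

theorem tendsto_of_monotone {ι : Type*} [Preorder ι] {S : ι → Set E} (hS : Monotone S)
    {P : ι → E → E} (hP : ∀ i, IsMetricProjection (P i) (S i)) {p : E → E}
    (hp : IsMetricProjection p (closure (⋃ i, S i))) (hconv : Convex ℝ (closure (⋃ i, S i)))
    (z : E) : Tendsto (fun i ↦ P i z) atTop (𝓝 (p z)) := by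
  have hmem : ∀ i, P i z ∈ closure (⋃ i, S i) := fun i ↦
    subset_closure (Set.mem_iUnion_of_mem i (hP i z).1)
  have hdist : Tendsto (fun i ↦ ‖z - P i z‖) atTop (𝓝 ‖z - p z‖) := by
    refine tendsto_order.2 ⟨fun a ha ↦ .of_forall fun i ↦ ha.trans_le ((hp z).2 _ (hmem i)),
      fun a ha ↦ ?_⟩
    obtain ⟨w, hw, hwdist⟩ := Metric.mem_closure_iff.1 (hp z).1 _ (sub_pos.2 ha)
    obtain ⟨j, hj⟩ := Set.mem_iUnion.1 hw
    filter_upwards [eventually_ge_atTop j] with i hij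
    calc ‖z - P i z‖ ≤ ‖z - w‖ := (hP i z).2 w (hS hij hj)
      _ ≤ ‖z - p z‖ + ‖p z - w‖ := norm_sub_le_norm_sub_add_norm_sub z (p z) w
      _ < a := by rw [← dist_eq_norm (p z)]; linarith
  have hsq : Tendsto (fun i ↦ ‖P i z - p z‖ ^ 2) atTop (𝓝 0) := by
    refine squeeze_zero (fun i ↦ sq_nonneg _) (fun i ↦ hp.norm_sub_sq_le hconv z (hmem i)) ?_
    exact tendsto_sub_nhds_zero_iff.2 (hdist.pow 2)
  rw [tendsto_iff_norm_sub_tendsto_zero]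
  simpa using hsq.sqrt

end IsMetricProjection

theorem exists_isMetricProjection_coneTangentAt [CompleteSpace E] (C : PointedCone ℝ E) (R : E) :
    ∃ p : E → E, IsMetricProjection p (coneTangentAt C R) :=
  exists_isMetricProjection ⟨0, zero_mem _⟩ isClosed_closure (coneTangentAt C R).convex

theorem IsMetricProjection.tendsto_recenter_atTop {C : PointedCone ℝ E} {P p : E → E} {R : E}
    (hP : IsMetricProjection P C) (hR : R ∈ C) (hp : IsMetricProjection p (coneTangentAt C R))
    (z : E) : Tendsto (fun t : ℝ ↦ P (t • R + z) - t • R) atTop (𝓝 (p z)) := by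
  have hconv := (coneTangentAt C R).convex
  rw [coe_coneTangentAt] at hp hconv
  exact tendsto_of_monotone (monotone_preimage_smul_add hR) (fun t ↦ hP.recenter (t • R)) hp
    hconv z

section Risk

variable [MeasurableSpace E] {μ : Measure E} {S : Set E} {C C₁ C₂ : PointedCone ℝ E}
  {P P₁ P₂ p : E → E} {R : E}

section OpensMeasurableSpace

variable [OpensMeasurableSpace E]

theorem IsMetricProjection.integrable_norm_sq (hμ : Integrable (fun z ↦ ‖z‖ ^ 2) μ)
    (hP : IsMetricProjection P S) (hS : Convex ℝ S) (h0 : (0 : E) ∈ S) :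
    Integrable (fun z ↦ ‖P z‖ ^ 2) μ := by
  have hcont := hP.continuous hS
  refine hμ.mono' (Continuous.aestronglyMeasurable (by fun_prop)) (.of_forall fun z ↦ ?_)
  rw [Real.norm_of_nonneg (sq_nonneg _)]
  gcongr
  exact hP.norm_le hS h0 z

theorem quadraticRisk_zero_le {Q : E → E} (hμ : Integrable (fun z ↦ ‖z‖ ^ 2) μ)
    (hP : IsMetricProjection P C) (hQ : IsMetricProjection Q S) (hS : Convex ℝ S)
    (h0 : (0 : E) ∈ S) (hSC : S ⊆ C) : quadraticRisk μ Q 0 ≤ quadraticRisk μ P 0 := by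
  simp only [quadraticRisk, zero_add, sub_zero]
  refine integral_mono (hQ.integrable_norm_sq hμ hS h0)
    (hP.integrable_norm_sq hμ C.convex C.zero_mem) fun z ↦ ?_
  dsimp only
  gcongr
  exact hP.norm_apply_le_norm_apply hQ hS h0 hSC z

theorem quadraticRisk_zero_pos [μ.IsOpenPosMeasure] (hμ : Integrable (fun z ↦ ‖z‖ ^ 2) μ)
    (hP : IsMetricProjection P S) (hconv : Convex ℝ S) (h0 : (0 : E) ∈ S) (hS : S.Nontrivial) :
    0 < quadraticRisk μ P 0 := by
  have hcont := hP.continuous hconv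
  obtain ⟨x, hx, hx0⟩ := hS.exists_ne 0
  simp only [quadraticRisk, zero_add, sub_zero]
  refine integral_pos_of_integrable_nonneg_nonzero (x := x) (by fun_prop)
    (hP.integrable_norm_sq hμ hconv h0) (fun z ↦ sq_nonneg _) ?_
  simpa [hP.apply_of_mem hx] using hx0

theorem IsMetricProjection.tendsto_quadraticRisk {ι : Type*} {l : Filter ι}
    [l.IsCountablyGenerated] {θ : ι → E} (hμ : Integrable (fun z ↦ ‖z‖ ^ 2) μ)
    (hP : IsMetricProjection P S) (hS : Convex ℝ S) (hθ : ∀ᶠ i in l, θ i ∈ S)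
    (hlim : ∀ z, Tendsto (fun i ↦ P (θ i + z) - θ i) l (𝓝 (p z))) :
    Tendsto (fun i ↦ quadraticRisk μ P (θ i)) l (𝓝 (quadraticRisk μ p 0)) := by
  have hcont := hP.continuous hS
  refine tendsto_integral_filter_of_dominated_convergence (fun z ↦ ‖z‖ ^ 2)
    (.of_forall fun i ↦ Continuous.aestronglyMeasurable (by fun_prop)) ?_ hμ
    (.of_forall fun z ↦ by simpa using (hlim z).norm.pow 2)
  filter_upwards [hθ] with i hi
  refine .of_forall fun z ↦ ?_
  rw [Real.norm_of_nonneg (sq_nonneg _)]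
  gcongr
  exact (hP.recenter (θ i)).norm_le (hS.translate_preimage_right (θ i)) (by simpa using hi) z

theorem IsMetricProjection.tendsto_quadraticRisk_smul_atTop (hμ : Integrable (fun z ↦ ‖z‖ ^ 2) μ)
    (hP : IsMetricProjection P C) (hR : R ∈ C) (hp : IsMetricProjection p (coneTangentAt C R)) :
    Tendsto (fun t : ℝ ↦ quadraticRisk μ P (t • R)) atTop (𝓝 (quadraticRisk μ p 0)) := by
  refine hP.tendsto_quadraticRisk hμ C.convex ?_ (hP.tendsto_recenter_atTop hR hp)
  filter_upwards [eventually_ge_atTop 0] with t ht using C.smul_mem ht hR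

theorem IsMetricProjection.tendsto_quadraticRisk_smul_nhdsGT_zero
    (hμ : Integrable (fun z ↦ ‖z‖ ^ 2) μ) (hP : IsMetricProjection P C) (hR : R ∈ C) :
    Tendsto (fun t : ℝ ↦ quadraticRisk μ P (t • R)) (𝓝[>] 0) (𝓝 (quadraticRisk μ P 0)) := by
  have hcont := hP.continuous C.convex
  refine hP.tendsto_quadraticRisk hμ C.convex ?_ fun z ↦ ?_
  · filter_upwards [self_mem_nhdsWithin] with t ht using C.smul_mem (le_of_lt ht) hR
  · have h : Continuous fun t : ℝ ↦ P (t • R + z) - t • R := by fun_prop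
    simpa using (h.tendsto 0).mono_left nhdsWithin_le_nhds

end OpensMeasurableSpace

variable [BorelSpace E]

theorem IsMetricProjection.quadraticRisk_map_smul (hP : IsMetricProjection P C) (μ : Measure E)
    (R : E) {σ : ℝ} (hσ : 0 < σ) :
    quadraticRisk (μ.map (σ • ·)) P R = σ ^ 2 * quadraticRisk μ P (σ⁻¹ • R) := by
  have hcont := hP.continuous C.convex
  have hscale (z : E) : P (R + σ • z) - R = σ • (P (σ⁻¹ • R + z) - σ⁻¹ • R) := by
    rw [smul_sub, ← hP.map_smul_of_pos hσ, smul_add, smul_inv_smul₀ hσ.ne']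
  rw [quadraticRisk, integral_map (by fun_prop) (Continuous.aestronglyMeasurable (by fun_prop)),
    quadraticRisk, ← integral_const_mul]
  simp only [hscale, norm_smul, mul_pow, Real.norm_of_nonneg hσ.le]

theorem quadraticRisk_map_smul_div (hP₁ : IsMetricProjection P₁ C₁)
    (hP₂ : IsMetricProjection P₂ C₂) (μ : Measure E) (R : E) {σ : ℝ} (hσ : 0 < σ) :
    quadraticRisk (μ.map (σ • ·)) P₂ R / quadraticRisk (μ.map (σ • ·)) P₁ R =
      quadraticRisk μ P₂ (σ⁻¹ • R) / quadraticRisk μ P₁ (σ⁻¹ • R) := by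
  rw [hP₁.quadraticRisk_map_smul μ R hσ, hP₂.quadraticRisk_map_smul μ R hσ,
    mul_div_mul_left _ _ (pow_pos hσ 2).ne']

theorem nested_cone_risk_limsup_general [CompleteSpace E] [μ.IsOpenPosMeasure]
    (hμ : Integrable (fun z ↦ ‖z‖ ^ 2) μ) (hC : C₂ ≤ C₁) (hC₁ : (C₁ : Set E).Nontrivial)
    (hR : R ∈ C₂) (hP₁ : IsMetricProjection P₁ C₁) (hP₂ : IsMetricProjection P₂ C₂) :
    (∃ a ≤ 1, Tendsto (fun σ : ℝ ↦ quadraticRisk (μ.map (σ • ·)) P₂ R /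
      quadraticRisk (μ.map (σ • ·)) P₁ R) (𝓝[>] 0) (𝓝 a)) ∧
    ∃ a ≤ 1, Tendsto (fun σ : ℝ ↦ quadraticRisk (μ.map (σ • ·)) P₂ R /
      quadraticRisk (μ.map (σ • ·)) P₁ R) atTop (𝓝 a) := by
  have hratio {σ : ℝ} (hσ : 0 < σ) := (quadraticRisk_map_smul_div hP₁ hP₂ μ R hσ).symm
  constructor
  · obtain ⟨p₁, hp₁⟩ := exists_isMetricProjection_coneTangentAt C₁ R
    obtain ⟨p₂, hp₂⟩ := exists_isMetricProjection_coneTangentAt C₂ R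
    have hpos := quadraticRisk_zero_pos hμ hp₁ (coneTangentAt C₁ R).convex (zero_mem _)
      (hC₁.mono (le_coneTangentAt C₁ R))
    have hle := quadraticRisk_zero_le hμ hp₁ hp₂ (coneTangentAt C₂ R).convex (zero_mem _)
      (coneTangentAt_mono hC R)
    refine ⟨_, (div_le_one hpos).2 hle,
      (((hP₂.tendsto_quadraticRisk_smul_atTop hμ hR hp₂).div
        (hP₁.tendsto_quadraticRisk_smul_atTop hμ (hC hR) hp₁) hpos.ne').comp
          tendsto_inv_nhdsGT_zero).congr' ?_⟩
    filter_upwards [self_mem_nhdsWithin] with σ hσ using hratio hσ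
  · have hpos := quadraticRisk_zero_pos hμ hP₁ C₁.convex C₁.zero_mem hC₁
    have hle := quadraticRisk_zero_le hμ hP₁ hP₂ C₂.convex C₂.zero_mem hC
    refine ⟨_, (div_le_one hpos).2 hle,
      (((hP₂.tendsto_quadraticRisk_smul_nhdsGT_zero hμ hR).div
        (hP₁.tendsto_quadraticRisk_smul_nhdsGT_zero hμ (hC hR)) hpos.ne').comp
          tendsto_inv_atTop_nhdsGT_zero).congr' ?_⟩
    filter_upwards [eventually_gt_atTop 0] with σ hσ using hratio hσ

end Risk

section Gaussian

instance isOpenPosMeasure_stdGaussian [FiniteDimensional ℝ E] [MeasurableSpace E] [BorelSpace E] :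
    (stdGaussian E).IsOpenPosMeasure := by
  have : (gaussianReal 0 1).IsOpenPosMeasure :=
    (gaussianReal_absolutelyContinuous' 0 one_ne_zero).isOpenPosMeasure
  refine Continuous.isOpenPosMeasure_map (by fun_prop) fun x ↦ ?_
  exact ⟨(stdOrthonormalBasis ℝ E).repr x, (stdOrthonormalBasis ℝ E).sum_repr x⟩

theorem gaussVec_eq_map_smul (n : ℕ) (σ : ℝ) :
    gaussVec n σ = (Measure.pi fun _ ↦ gaussianReal 0 1).map (σ • ·) := by
  have hcoord : (gaussianReal 0 1).map (σ * ·) = gaussianReal 0 (σ ^ 2).toNNReal := by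
    rw [gaussianReal_map_const_mul, mul_zero, mul_one, Real.toNNReal_of_nonneg (sq_nonneg σ)]
  rw [gaussVec, ← hcoord]
  exact (Measure.pi_map_pi fun _ ↦ by fun_prop).symm

theorem map_toLp_gaussVec (n : ℕ) (σ : ℝ) :
    (gaussVec n σ).map (WithLp.toLp 2) =
      (stdGaussian (EuclideanSpace ℝ (Fin n))).map (σ • ·) := by
  rw [gaussVec_eq_map_smul, ← map_pi_eq_stdGaussian, Measure.map_map (by fun_prop) (by fun_prop),
    Measure.map_map (by fun_prop) (by fun_prop)]
  rfl

theorem quadraticRisk_stdGaussian_map_smul {n : ℕ}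
    {P : EuclideanSpace ℝ (Fin n) → EuclideanSpace ℝ (Fin n)} (hP : Continuous P)
    (R : EuclideanSpace ℝ (Fin n)) (σ : ℝ) :
    quadraticRisk ((stdGaussian (EuclideanSpace ℝ (Fin n))).map (σ • ·)) P R =
      ∫ z, ‖P (R + (WithLp.equiv 2 (Fin n → ℝ)).symm z) - R‖ ^ 2 ∂gaussVec n σ := by
  rw [← map_toLp_gaussVec, quadraticRisk,
    integral_map (by fun_prop) (Continuous.aestronglyMeasurable (by fun_prop))]
  rfl

end Gaussian

/-- Proposition 2.2 (`prop:improve`): for nested closed convex cones `S₂ ⊆ S₁` both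
containing the ground truth `R`, the risk of projecting onto the smaller cone is
asymptotically no larger, both as `σ → 0⁺` and as `σ → ∞`. -/
theorem nested_cone_risk_limsup {n : ℕ}
    (R : EuclideanSpace ℝ (Fin n))
    (S₁ S₂ : Set (EuclideanSpace ℝ (Fin n)))
    (hsub : S₂ ⊆ S₁)
    (hcl₁ : IsClosed S₁) (hcl₂ : IsClosed S₂)
    (hconv₁ : Convex ℝ S₁) (hconv₂ : Convex ℝ S₂)
    (hcone₁ : ∀ x ∈ S₁, ∀ c : ℝ, 0 ≤ c → c • x ∈ S₁)
    (hcone₂ : ∀ x ∈ S₂, ∀ c : ℝ, 0 ≤ c → c • x ∈ S₂)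
    (hR₁ : R ∈ S₁) (hR₂ : R ∈ S₂)
    (P₁ P₂ : EuclideanSpace ℝ (Fin n) → EuclideanSpace ℝ (Fin n))
    (hP₁ : ∀ y, P₁ y ∈ S₁ ∧ ∀ r ∈ S₁, ‖y - P₁ y‖ ≤ ‖y - r‖)
    (hP₂ : ∀ y, P₂ y ∈ S₂ ∧ ∀ r ∈ S₂, ‖y - P₂ y‖ ≤ ‖y - r‖)
    (risk₁ risk₂ : ℝ → ℝ)
    (hrisk₁ : ∀ σ : ℝ, risk₁ σ = ∫ z : Fin n → ℝ, ‖P₁ (R + (WithLp.equiv 2 (Fin n → ℝ)).symm z) - R‖ ^ 2 ∂(gaussVec n σ))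
    (hrisk₂ : ∀ σ : ℝ, risk₂ σ = ∫ z : Fin n → ℝ, ‖P₂ (R + (WithLp.equiv 2 (Fin n → ℝ)).symm z) - R‖ ^ 2 ∂(gaussVec n σ))
    (hpos : ∀ σ : ℝ, 0 < σ → 0 < risk₁ σ) :
    limsup (fun σ => risk₂ σ / risk₁ σ) (nhdsWithin 0 (Set.Ioi 0)) ≤ 1 ∧
      limsup (fun σ => risk₂ σ / risk₁ σ) atTop ≤ 1 := by
  obtain ⟨C₁, rfl⟩ := exists_pointedCone_coe_eq ⟨R, hR₁⟩ hconv₁ hcone₁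
  obtain ⟨C₂, rfl⟩ := exists_pointedCone_coe_eq ⟨R, hR₂⟩ hconv₂ hcone₂
  replace hP₁ : IsMetricProjection P₁ C₁ := hP₁
  replace hP₂ : IsMetricProjection P₂ C₂ := hP₂
  simp only [← quadraticRisk_stdGaussian_map_smul (hP₁.continuous hconv₁)] at hrisk₁
  simp only [← quadraticRisk_stdGaussian_map_smul (hP₂.continuous hconv₂)] at hrisk₂
  have hμ : Integrable (fun z ↦ ‖z‖ ^ 2) (stdGaussian (EuclideanSpace ℝ (Fin n))) :=
    IsGaussian.memLp_two_id.integrable_norm_pow two_ne_zero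
  obtain ⟨⟨a, ha, hlim_zero⟩, b, hb, hlim_top⟩ := nested_cone_risk_limsup_general hμ hsub
    (hP₁.nontrivial_of_quadraticRisk_pos hR₁ (hrisk₁ 1 ▸ hpos 1 one_pos)) hR₂ hP₁ hP₂
  simp only [hrisk₁, hrisk₂]
  exact ⟨hlim_zero.limsup_eq.trans_le ha, hlim_top.limsup_eq.trans_le hb⟩
end

section
/- Let {S_k} be a collection of at least two closed subsets of ℝ, each with nonempty interior, whose union is ℝ and such that the interior of each element is disjoint from every other element. Then there exist a real number R, an element S of the collection with R in the interior of S, and a different element S′, such that the unique point of S′ at minimum distance from R is strictly greater than R. Consequently, in the noiseless setting with the nondecreasing convex utility U(x) = x, the owner strictly increases her utility by reporting S′ instead of the truthful element S, so no nontrivial such partition of ℝ is truthful. -/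
/-!
Two disjoint nonempty subsets of a line cannot both be upper sets, so some element `S` has a point
`a` in its interior such that, moving right from `a`, one leaves the interior for the first time
at some `b > a`. Points outside `S` accumulate at `b`; let `T ≠ S` be an element containing one of
them, at distance less than `b - a` from `b`. As `T` avoids `[a, b)`, its first point `d` to the
right of `a` is at distance less than `b - a` from `b`, whereas its points to the left of `a` are
farther than that from `b`. An observation `R` in `(a, b)` close enough to `b` therefore has `d > R`
as its unique nearest point in `T`.
-/

open Set

theorem exists_not_isUpperSet_of_pairwiseDisjoint {ι α : Type*} [LinearOrder α] {I : Set ι}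
    {u : ι → Set α} (hI : I.Nontrivial) (hne : ∀ i ∈ I, (u i).Nonempty)
    (hdisj : I.PairwiseDisjoint u) : ∃ i ∈ I, ¬ IsUpperSet (u i) := by
  by_contra! hup
  obtain ⟨i, hi, j, hj, hij⟩ := hI
  rcases (hup i hi).total (hup j hj) with hsub | hsub
  · exact (hne i hi).ne_empty ((hdisj hi hj hij).eq_bot_of_le hsub)
  · exact (hne j hj).ne_empty ((hdisj hj hi hij.symm).eq_bot_of_le hsub)

theorem exists_isLeast_inter_Ici {α : Type*} [ConditionallyCompleteLinearOrder α]
    [TopologicalSpace α] [OrderTopology α] {s : Set α} {a b : α} (hs : IsClosed s) (hb : b ∈ s)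
    (hab : a ≤ b) : ∃ d, IsLeast (s ∩ Ici a) d :=
  ⟨_, (hs.inter isClosed_Ici).isLeast_csInf ⟨b, hb, hab⟩ (bddBelow_Ici.mono inter_subset_right)⟩

theorem exists_Ico_subset_of_not_isUpperSet {α : Type*} [ConditionallyCompleteLinearOrder α]
    [TopologicalSpace α] [OrderTopology α] {U : Set α} (hU : IsOpen U) (hup : ¬ IsUpperSet U) :
    ∃ a b, a < b ∧ Ico a b ⊆ U ∧ b ∉ U := by
  obtain ⟨a, c, hac, ha, hc⟩ : ∃ a c, a ≤ c ∧ a ∈ U ∧ c ∉ U := by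
    simpa [IsUpperSet] using hup
  obtain ⟨b, ⟨hb, hab⟩, hb_le⟩ := exists_isLeast_inter_Ici hU.isClosed_compl hc hac
  refine ⟨a, b, lt_of_le_of_ne hab fun h => hb (h ▸ ha), fun x hx => ?_, hb⟩
  by_contra hxU
  exact hx.2.not_ge (hb_le ⟨hxU, hx.1⟩)

theorem abs_sub_lt_abs_sub_of_isLeast_inter_Ici {α : Type*} [AddCommGroup α] [LinearOrder α]
    [IsOrderedAddMonoid α] {s : Set α} {a d x q : α} (hd : IsLeast (s ∩ Ici a) d) (hxd : x ≤ d)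
    (hx : d - x ≤ x - a) (hq : q ∈ s) (hqd : q ≠ d) : |x - d| < |x - q| := by
  rw [abs_sub_comm, abs_of_nonneg (sub_nonneg.2 hxd)]
  rcases le_or_gt a q with haq | hqa
  · have hdq : d < q := (hd.2 ⟨hq, haq⟩).lt_of_ne' hqd
    calc d - x < q - x := sub_lt_sub_right hdq x
      _ ≤ |q - x| := le_abs_self _
      _ = |x - q| := abs_sub_comm q x
  · calc d - x ≤ x - a := hx
      _ < x - q := sub_lt_sub_left hqa x
      _ ≤ |x - q| := le_abs_self _

theorem forall_le_and_forall_eq_of_forall_ne_lt {α β : Type*} [Preorder β] {f : α → β} {s : Set α}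
    {p : α} (hp : p ∈ s) (hlt : ∀ q ∈ s, q ≠ p → f p < f q) :
    (∀ q ∈ s, f p ≤ f q) ∧ ∀ q ∈ s, (∀ q' ∈ s, f q ≤ f q') → q = p := by
  refine ⟨fun q hq => ?_, fun q hq hmin => ?_⟩
  · rcases eq_or_ne q p with rfl | hqp
    · exact le_rfl
    · exact (hlt q hq hqp).le
  · by_contra hqp
    exact (hlt q hq hqp).not_ge (hmin p hp)

theorem exists_mem_Ioo_forall_ne_abs_sub_lt {T : Set ℝ} {a b t : ℝ} (hT : IsClosed T)
    (hdisj : Disjoint (Ico a b) T) (ht : t ∈ T) (hat : a < t) (htb : t - b < b - a) :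
    ∃ R ∈ Ioo a b, ∃ p ∈ T, R < p ∧ ∀ q ∈ T, q ≠ p → |R - p| < |R - q| := by
  obtain ⟨d, hd⟩ := exists_isLeast_inter_Ici hT ht hat.le
  have hdt : d ≤ t := hd.2 ⟨ht, hat.le⟩
  have hbd : b ≤ d := by
    by_contra! hdb
    exact hdisj.notMem_of_mem_left ⟨hd.1.2, hdb⟩ hd.1.1
  -- Right of the midpoint of `a` and `d`, one is closer to `d` than to anything left of `a`.
  obtain ⟨R, hR, hRb⟩ : ∃ R, (a + d) / 2 < R ∧ R < b := exists_between (by linarith)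
  have hRd : R < d := hRb.trans_le hbd
  exact ⟨R, ⟨by linarith, hRb⟩, d, hd.1.1, hRd, fun q =>
    abs_sub_lt_abs_sub_of_isLeast_inter_Ici hd hRd.le (by linarith)⟩

theorem no_truthful_partition_dim_one_general (𝒮 : Set (Set ℝ))
    (hcl : ∀ S ∈ 𝒮, IsClosed S) (hcover : ⋃₀ 𝒮 = univ) {S : Set ℝ} (hS : S ∈ 𝒮)
    (hdisj : ∀ T ∈ 𝒮, S ≠ T → interior S ∩ T = ∅) (hup : ¬ IsUpperSet (interior S)) :
    ∃ R : ℝ, ∃ S ∈ 𝒮, R ∈ interior S ∧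
      ∃ S' ∈ 𝒮, S' ≠ S ∧ ∃ p ∈ S',
        (∀ q ∈ S', |R - p| ≤ |R - q|) ∧
        (∀ q ∈ S', (∀ q' ∈ S', |R - q| ≤ |R - q'|) → q = p) ∧
        R < p := by
  obtain ⟨a, b, hab, hsub, hb⟩ := exists_Ico_subset_of_not_isUpperSet isOpen_interior hup
  obtain ⟨t, ⟨hat, htb⟩, htS⟩ : ∃ t ∈ Ioo a (b + (b - a)), t ∉ S := by
    by_contra! hIoo
    exact hb (interior_maximal hIoo isOpen_Ioo ⟨hab, by linarith⟩)
  obtain ⟨T, hT, htT⟩ : t ∈ ⋃₀ 𝒮 := hcover ▸ mem_univ t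
  have hTS : T ≠ S := fun h => htS (h ▸ htT)
  have hIco : Disjoint (Ico a b) T :=
    (disjoint_iff_inter_eq_empty.2 (hdisj T hT hTS.symm)).mono_left hsub
  obtain ⟨R, hR, p, hp, hRp, hlt⟩ :=
    exists_mem_Ioo_forall_ne_abs_sub_lt (hcl T hT) hIco htT hat (by linarith)
  obtain ⟨hmin, huniq⟩ :=
    forall_le_and_forall_eq_of_forall_ne_lt (f := fun q => |R - q|) hp hlt
  exact ⟨R, S, hS, hsub (Ioo_subset_Ico_self hR), T, hT, hTS, p, hp, hmin, huniq, hRp⟩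

/-- Proposition 2.3 (`prop:n=1`): no nontrivial knowledge partition of `ℝ` is truthful.
For any collection of at least two closed sets with nonempty interiors covering `ℝ`,
whose interiors are disjoint from the other elements, there are a ground truth `R`
lying in the interior of a truthful element `S` and a different element `S'` whose
unique closest point to `R` is strictly larger than `R`; hence with the nondecreasing
convex utility `U(x) = x` the owner strictly gains by misreporting `S'`. -/
theorem no_truthful_partition_dim_one (𝒮 : Set (Set ℝ))
    (hcl : ∀ S ∈ 𝒮, IsClosed S)
    (hint : ∀ S ∈ 𝒮, (interior S).Nonempty)
    (hcover : ⋃₀ 𝒮 = Set.univ)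
    (hdisj : ∀ S ∈ 𝒮, ∀ T ∈ 𝒮, S ≠ T → interior S ∩ T = ∅)
    (hnontriv : ∃ S ∈ 𝒮, ∃ T ∈ 𝒮, S ≠ T) :
    ∃ R : ℝ, ∃ S ∈ 𝒮, R ∈ interior S ∧
      ∃ S' ∈ 𝒮, S' ≠ S ∧ ∃ p ∈ S',
        (∀ q ∈ S', |R - p| ≤ |R - q|) ∧
        (∀ q ∈ S', (∀ q' ∈ S', |R - q| ≤ |R - q'|) → q = p) ∧
        R < p := by
  have hint_disj : 𝒮.PairwiseDisjoint interior := fun S hS T hT hST =>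
    (disjoint_iff_inter_eq_empty.2 (hdisj S hS T hT hST)).mono_right interior_subset
  obtain ⟨S, hS, hup⟩ := exists_not_isUpperSet_of_pairwiseDisjoint hnontriv hint hint_disj
  exact no_truthful_partition_dim_one_general 𝒮 hcl hcover hS (hdisj S hS) hup
end

section
/- Let I = (I₁,…,I_p) be an ordered partition of {1,…,n}, let S_I = {x ∈ ℝⁿ : x_i ≥ x_j for all i ∈ I_q, j ∈ I_{q′} with q < q′}, let y ∈ ℝⁿ, and let R̂ denote the metric projection of y onto S_I. Then for every block I_q and every pair of indices j, k ∈ I_q, y_j ≥ y_k implies R̂_j ≥ R̂_k. Consequently, R̂ coincides with the metric projection of y onto the isotonic cone {r ∈ ℝⁿ : r_{π(1)} ≥ r_{π(2)} ≥ ⋯ ≥ r_{π(n)}}, where π is any permutation listing the indices of I₁ in decreasing order of their y-values, then the indices of I₂ in decreasing order of their y-values, and so on. -/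
open Finset

/-- The coarse-ranking cone `S_I` associated with an ordered partition
`I = (I₁, …, I_p)` of `{1, …, n}`. -/
def coarseCone {n p : ℕ} (I : Fin p → Finset (Fin n)) : Set (EuclideanSpace ℝ (Fin n)) :=
  {x | ∀ q q' : Fin p, q < q' → ∀ i ∈ I q, ∀ j ∈ I q', x j ≤ x i}

/-- The isotonic cone `{r : r_{π(1)} ≥ r_{π(2)} ≥ ⋯ ≥ r_{π(n)}}` associated with a
ranking `π`. -/
def rankCone {n : ℕ} (π : Equiv.Perm (Fin n)) : Set (EuclideanSpace ℝ (Fin n)) :=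
  {r | ∀ k l : Fin n, k ≤ l → r (π l) ≤ r (π k)}

/-- `π` lists the indices of `I₁` in decreasing order of their `y`-values, then the
indices of `I₂` in decreasing order of their `y`-values, and so on. -/
def SortsBlocks {n p : ℕ} (I : Fin p → Finset (Fin n)) (y : EuclideanSpace ℝ (Fin n))
    (π : Equiv.Perm (Fin n)) : Prop :=
  ∀ k l : Fin n, k ≤ l → ∀ q q' : Fin p, π k ∈ I q → π l ∈ I q' →
    q ≤ q' ∧ (q = q' → y (π l) ≤ y (π k))

/-!
For a projection `p` of `y` onto a convex set `S`, every `r ∈ S` satisfies `⟪y - p, r - p⟫ ≤ 0`.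
Taking for `r` the vector `p` with its coordinates `j` and `k` exchanged turns this into
`(p j - p k) ^ 2 ≤ (y j - y k) * (p j - p k)`, so the projection respects the order of `y j` and
`y k` whenever `S` contains that `r`. The coarse cone contains it when `j` and `k` share a block.
The projection onto the coarse cone therefore lies in the isotonic cone, which is contained in the
coarse cone, so it minimizes the distance over the smaller cone as well.
-/

section Projection

open scoped InnerProductSpace

theorem real_inner_sub_sub_nonpos_of_isMinOn {E : Type*} [NormedAddCommGroup E]
    [InnerProductSpace ℝ E] {S : Set E} (hS : Convex ℝ S) {y p r : E} (hp : p ∈ S)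
    (hmin : IsMinOn (fun s ↦ ‖y - s‖) S p) (hr : r ∈ S) : ⟪y - p, r - p⟫_ℝ ≤ 0 :=
  (norm_eq_iInf_iff_real_inner_le_zero hS hp).mp (hmin.iInf_eq hp).symm r hr

variable {ι : Type*} [Fintype ι] [DecidableEq ι]

theorem real_inner_swap_sub (x z : EuclideanSpace ℝ ι) (j k : ι) :
    ⟪x, WithLp.toLp 2 (fun i ↦ z (Equiv.swap j k i)) - z⟫_ℝ = -((x j - x k) * (z j - z k)) := by
  have swap_sub_eq : WithLp.toLp 2 (fun i ↦ z (Equiv.swap j k i)) - z =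
      (z k - z j) • (EuclideanSpace.single j 1 - EuclideanSpace.single k 1) := by
    ext i
    simp only [PiLp.sub_apply, PiLp.smul_apply, PiLp.single_apply, Equiv.swap_apply_def]
    split_ifs <;> simp_all
  rw [swap_sub_eq, real_inner_smul_right, inner_sub_right, EuclideanSpace.inner_single_right,
    EuclideanSpace.inner_single_right]
  simp only [one_mul, conj_trivial]
  ring

theorem apply_le_apply_of_isMinOn_of_swap_mem {S : Set (EuclideanSpace ℝ ι)} (hS : Convex ℝ S)
    {y p : EuclideanSpace ℝ ι} (hp : p ∈ S) (hmin : IsMinOn (fun s ↦ ‖y - s‖) S p) {j k : ι}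
    (hswap : WithLp.toLp 2 (fun i ↦ p (Equiv.swap j k i)) ∈ S) (hy : y k ≤ y j) :
    p k ≤ p j := by
  have sq_le_mul : (p j - p k) ^ 2 ≤ (y j - y k) * (p j - p k) := by
    have := real_inner_sub_sub_nonpos_of_isMinOn hS hp hmin hswap
    rw [real_inner_swap_sub] at this
    simp only [PiLp.sub_apply] at this
    linarith
  by_contra! hlt
  nlinarith

end Projection

section Cones

variable {n p : ℕ} {I : Fin p → Finset (Fin n)} {x y : EuclideanSpace ℝ (Fin n)}

theorem convex_coarseCone (I : Fin p → Finset (Fin n)) : Convex ℝ (coarseCone I) := by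
  intro x hx z hz a b ha hb _ q q' hqq' i hi j hj
  simp only [PiLp.add_apply, PiLp.smul_apply, smul_eq_mul]
  gcongr
  · exact hx q q' hqq' i hi j hj
  · exact hz q q' hqq' i hi j hj

theorem comp_mem_coarseCone (hx : x ∈ coarseCone I) {f : Fin n → Fin n}
    (hf : ∀ q, Set.MapsTo f (I q) (I q)) : WithLp.toLp 2 (fun i ↦ x (f i)) ∈ coarseCone I :=
  fun q q' hqq' i hi j hj ↦ hx q q' hqq' (f i) (hf q hi) (f j) (hf q' hj)

theorem swap_mem_coarseCone (hI : Pairwise fun q q' ↦ Disjoint (I q) (I q'))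
    (hx : x ∈ coarseCone I) {q : Fin p} {j k : Fin n} (hj : j ∈ I q) (hk : k ∈ I q) :
    WithLp.toLp 2 (fun i ↦ x (Equiv.swap j k i)) ∈ coarseCone I := by
  have block_eq {i : Fin n} {r : Fin p} (hq : i ∈ I q) (hr : i ∈ I r) : q = r :=
    hI.eq (Finset.not_disjoint_iff.mpr ⟨i, hq, hr⟩)
  have mem_iff (r : Fin p) : j ∈ I r ↔ k ∈ I r :=
    ⟨fun h ↦ block_eq hj h ▸ hk, fun h ↦ block_eq hk h ▸ hj⟩
  exact comp_mem_coarseCone hx fun r ↦ (Equiv.swap_bijOn_self (mem_iff r)).mapsTo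

theorem IsProjOn.apply_le_apply_of_mem_block (hx : IsProjOn (coarseCone I) y x)
    (hI : Pairwise fun q q' ↦ Disjoint (I q) (I q')) {q : Fin p} {j k : Fin n}
    (hj : j ∈ I q) (hk : k ∈ I q) (hy : y k ≤ y j) : x k ≤ x j :=
  apply_le_apply_of_isMinOn_of_swap_mem (convex_coarseCone I) hx.1 (isMinOn_iff.mpr hx.2)
    (swap_mem_coarseCone hI hx.1 hj hk) hy

theorem IsProjOn.of_subset {S T : Set (EuclideanSpace ℝ (Fin n))} (hx : IsProjOn S y x)
    (hTS : T ⊆ S) (hxT : x ∈ T) : IsProjOn T y x :=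
  ⟨hxT, fun r hr ↦ hx.2 r (hTS hr)⟩

variable {π : Equiv.Perm (Fin n)}

theorem SortsBlocks.rankCone_subset_coarseCone (hπ : SortsBlocks I y π) :
    rankCone π ⊆ coarseCone I := by
  intro r hr q q' hqq' i hi j hj
  have rank_le : π.symm i ≤ π.symm j := by
    by_contra! hlt
    have hle := (hπ _ _ hlt.le q' q (by simpa using hj) (by simpa using hi)).1
    exact hle.not_gt hqq'
  simpa using hr _ _ rank_le

theorem SortsBlocks.mem_rankCone (hπ : SortsBlocks I y π) (hcover : ∀ i, ∃ q, i ∈ I q)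
    (hx : x ∈ coarseCone I) (hblock : ∀ q, ∀ j ∈ I q, ∀ k ∈ I q, y k ≤ y j → x k ≤ x j) :
    x ∈ rankCone π := by
  intro k l hkl
  obtain ⟨q, hq⟩ := hcover (π k)
  obtain ⟨q', hq'⟩ := hcover (π l)
  obtain ⟨hle, hy⟩ := hπ k l hkl q q' hq hq'
  rcases hle.eq_or_lt with rfl | hlt
  · exact hblock q _ hq _ hq' (hy rfl)
  · exact hx q q' hlt _ hq _ hq'

end Cones

/-- Lemma 6.11 (`lm:reduce_iso`): the projection onto the coarse cone `S_I` preserves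
the within-block order of `y`, and coincides with the projection of `y` onto the
isotonic cone of any permutation sorting each block of `I` by decreasing `y`-values. -/
theorem coarse_projection_eq_isotonic {n p : ℕ}
    (I : Fin p → Finset (Fin n))
    (hIDisj : ∀ q q' : Fin p, q ≠ q' → Disjoint (I q) (I q'))
    (hICover : Finset.univ.biUnion I = Finset.univ)
    (y Rhat : EuclideanSpace ℝ (Fin n))
    (hRhat : IsProjOn (coarseCone I) y Rhat) :
    (∀ q : Fin p, ∀ j ∈ I q, ∀ k ∈ I q, y k ≤ y j → Rhat k ≤ Rhat j) ∧
      ∀ π : Equiv.Perm (Fin n), SortsBlocks I y π →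
        IsProjOn (rankCone π) y Rhat := by
  have hblock : ∀ q, ∀ j ∈ I q, ∀ k ∈ I q, y k ≤ y j → Rhat k ≤ Rhat j :=
    fun _ _ hj _ hk hy ↦ hRhat.apply_le_apply_of_mem_block hIDisj hj hk hy
  have hcover (i : Fin n) : ∃ q, i ∈ I q := by
    simpa using hICover.ge (Finset.mem_univ i)
  exact ⟨hblock, fun π hπ ↦ hRhat.of_subset hπ.rankCone_subset_coarseCone
    (hπ.mem_rankCone hcover hRhat.1 hblock)⟩
end
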